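/- Let m ≥ 1, D₁, …, D_m ≥ 0, a ∈ ℝ, and let C ⊆ {0,1}^m be nonempty. Fix i ∈ {1, …, m} and suppose C is invariant under the reflection σ_i that flips the i-th coordinate (σ_i(s)_i = 1 − s_i and σ_i(s)_j = s_j for j ≠ i). Then the supremum, over all product probability measures α = (α₁, …, α_m) ∈ [0,1]^m on {0,1}^m with E_α[h^C] ≤ 0, of α({t : h^C(t) ≥ a}), equals the same supremum restricted to those α with α_i = 1. -/

import Mathlib

/-!
If `s` ranges over `C`, so does its reflection `σ s` in coordinate `i`, and `σ s`, `σ t` disagree in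
exactly the coordinates in which `s`, `t` do. Hence `h^C` is invariant under `σ`, which means that
`h^C t` does not depend on `t i` (`hC_update`). Setting the `i`-th coordinate to `1` therefore leaves
`h^C` unchanged, while it pushes the product measure with parameters `α` forward to the one with
`α i` replaced by `1` (`map_berPi`). So this replacement preserves both `E_α[h^C]` and
`α {h^C ≥ a}`, and every value attained by a feasible `α` is attained by a feasible one
with `α i = 1`.
-/

open MeasureTheory
open scoped ENNReal

/-- The product ("Bernoulli") probability measure on `{0,1}^m` determined by
`α ∈ [0,1]^m`, where `α i` is the probability that the `i`-th coordinate is `1`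
(i.e. `true`). -/
noncomputable def berPi {m : ℕ} (α : Fin m → ℝ) : Measure (Fin m → Bool) :=
  Measure.pi fun i =>
    ENNReal.ofReal (α i) • Measure.dirac true +
      ENNReal.ofReal (1 - α i) • Measure.dirac false

/-- `hC a D C t = a - min_{s ∈ C} Σ_{i : s i ≠ t i} D i`, the function `h^C` of the
paper, for a nonempty `C ⊆ {0,1}^m`. -/
noncomputable def hC {m : ℕ} (a : ℝ) (D : Fin m → ℝ) (C : Set (Fin m → Bool))
    (t : Fin m → Bool) : ℝ :=
  a - sInf ((fun s => ∑ i, if s i = t i then 0 else D i) '' C)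

lemma hC_flip {m : ℕ} (D : Fin m → ℝ) (a : ℝ) (C : Set (Fin m → Bool)) (i : Fin m)
    (hsym : ∀ s ∈ C, Function.update s i (!(s i)) ∈ C) (t : Fin m → Bool) :
    hC a D C (Function.update t i (!(t i))) = hC a D C t := by
  -- Reflecting both arguments in coordinate `i` does not change where they disagree.
  have key : ∀ s t : Fin m → Bool,
      (∑ j, if Function.update s i (!(s i)) j = Function.update t i (!(t i)) j then 0 else D j)
        = ∑ j, if s j = t j then 0 else D j := by
    intro s t
    refine Finset.sum_congr rfl fun j _ => ?_
    by_cases h : j = i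
    · subst h; simp
    · simp [h]
  have inv : ∀ s : Fin m → Bool,
      Function.update (Function.update s i (!(s i))) i (!(Function.update s i (!(s i)) i)) = s := by
    intro s; simp
  unfold hC
  congr 2
  ext x
  constructor
  · rintro ⟨s, hs, rfl⟩
    refine ⟨_, hsym s hs, ?_⟩
    have := key s (Function.update t i (!(t i)))
    rwa [inv] at this
  · rintro ⟨s, hs, rfl⟩
    exact ⟨_, hsym s hs, key s t⟩

lemma hC_update {m : ℕ} (D : Fin m → ℝ) (a : ℝ) (C : Set (Fin m → Bool)) (i : Fin m)
    (hsym : ∀ s ∈ C, Function.update s i (!(s i)) ∈ C) (t : Fin m → Bool) :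
    hC a D C (Function.update t i true) = hC a D C t := by
  by_cases h : t i = true
  · rw [← h, Function.update_eq_self]
  · have := hC_flip D a C i hsym t
    rwa [Bool.eq_false_of_not_eq_true h, Bool.not_false] at this

lemma isProbabilityMeasure_bernoulli {p : ℝ} (hp : p ∈ Set.Icc (0 : ℝ) 1) :
    IsProbabilityMeasure (ENNReal.ofReal p • Measure.dirac true +
      ENNReal.ofReal (1 - p) • Measure.dirac false) := by
  constructor
  simp [← ENNReal.ofReal_add hp.1 (sub_nonneg.2 hp.2)]

lemma map_berPi {m : ℕ} (α : Fin m → ℝ) (hα : ∀ j, α j ∈ Set.Icc (0 : ℝ) 1) (i : Fin m) :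
    (berPi α).map (fun t => Function.update t i true) = berPi (Function.update α i 1) := by
  have hprob := fun j => isProbabilityMeasure_bernoulli (hα j)
  -- The map acts coordinatewise: constantly `true` at `i`, and as the identity elsewhere.
  have hfun : (fun t : Fin m → Bool => Function.update t i true) =
      fun t j => (if j = i then fun _ => true else id : Bool → Bool) (t j) := by
    funext t j
    by_cases h : j = i
    · subst h; simp
    · simp [h]
  have hsf : ∀ j, SigmaFinite
      ((ENNReal.ofReal (α j) • Measure.dirac true +
        ENNReal.ofReal (1 - α j) • Measure.dirac false : Measure Bool).map
        (if j = i then fun _ => true else id : Bool → Bool)) := fun j => inferInstance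
  unfold berPi
  rw [hfun, Measure.pi_map_pi fun j => Measurable.of_discrete.aemeasurable]
  congr 1
  funext j
  by_cases h : j = i
  · subst h
    have h1 := (hprob j).measure_univ
    simp only [if_true, Measure.map_const, h1]
    simp
  · simp [h]

/-- **Symmetry reduction lemma.** If the nonempty set `C ⊆ {0,1}^m` is invariant
under the reflection flipping coordinate `i`, then the supremum of
`α {h^C ≥ a}` over product probability measures parameterized by `α ∈ [0,1]^m`
with `E_α[h^C] ≤ 0` equals the same supremum restricted to `α` with `α i = 1`. -/
theorem stmt15 {m : ℕ} (hm : 1 ≤ m) (D : Fin m → ℝ) (hD : ∀ i, 0 ≤ D i) (a : ℝ)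
    (C : Set (Fin m → Bool)) (hCne : C.Nonempty) (i : Fin m)
    (hsym : ∀ s ∈ C, Function.update s i (!(s i)) ∈ C) :
    sSup {v : ℝ≥0∞ | ∃ α : Fin m → ℝ,
        (∀ j, α j ∈ Set.Icc (0 : ℝ) 1) ∧
        (∫ t, hC a D C t ∂berPi α) ≤ 0 ∧
        v = berPi α {t | a ≤ hC a D C t}} =
    sSup {v : ℝ≥0∞ | ∃ α : Fin m → ℝ,
        (∀ j, α j ∈ Set.Icc (0 : ℝ) 1) ∧ α i = 1 ∧
        (∫ t, hC a D C t ∂berPi α) ≤ 0 ∧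
        v = berPi α {t | a ≤ hC a D C t}} := by
  have hmeas : Measurable fun t : Fin m → Bool => Function.update t i true :=
    Measurable.of_discrete
  congr 1
  ext v
  constructor
  · rintro ⟨α, hα, hint, rfl⟩
    refine ⟨Function.update α i 1, fun j => ?_, by simp, ?_, ?_⟩
    · by_cases h : j = i
      · subst h; simp
      · simpa [h] using hα j
    · rw [← map_berPi α hα i, integral_map hmeas.aemeasurable
        Measurable.of_discrete.aestronglyMeasurable]
      simpa only [hC_update D a C i hsym] using hint
    · rw [← map_berPi α hα i, Measure.map_apply hmeas (Set.toFinite _).measurableSet]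
      simp only [Set.preimage_ofPred_eq, hC_update D a C i hsym]
  · rintro ⟨α, hα, -, hint, hv⟩
    exact ⟨α, hα, hint, hv⟩
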